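/- Let A : ℝ³ → ℝ³ be the linear map A(u₁, u₂, u₃) = (−u₂, u₁, −u₂), ξ(p) = e^{−y}(0, 0, 1), and η_p(u) = e^{y}(u₃ − u₁), for p = (x, y, z) ∈ ℝ³. For the constant vector fields E₁(p) = (1, 0, 0) and E₂(p) = (0, 1, 0), the tensor N⁽¹⁾(X, Y) = N_A(X, Y) + (X(η(Y)) − Y(η(X)) − η([X, Y]))·ξ satisfies N⁽¹⁾(E₁, E₂)(p) = (0, 0, 1) for every p ∈ ℝ³; in particular N⁽¹⁾ ≠ 0. -/

import Mathlib

/-- The constant-coefficient tensor `A(u) = (−u₂, u₁, −u₂)` of Example 4.4. -/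
def Amap (u : Fin 3 → ℝ) : Fin 3 → ℝ := ![-u 1, u 0, -u 1]

/-- The Reeb vector field `ξ(p) = e^{−y}(0,0,1)` of Example 4.4. -/
noncomputable def xiVF (p : Fin 3 → ℝ) : Fin 3 → ℝ := Real.exp (-p 1) • ![0, 0, 1]

/-- The 1-form `η_p(u) = e^{y}(u₃ − u₁)` of Example 4.4. -/
noncomputable def etaForm (p u : Fin 3 → ℝ) : ℝ := Real.exp (p 1) * (u 2 - u 0)

/-- The Lie bracket of vector fields on `ℝ³`. -/
noncomputable def lieBr (X Y : (Fin 3 → ℝ) → Fin 3 → ℝ) (p : Fin 3 → ℝ) : Fin 3 → ℝ :=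
  fderiv ℝ Y p (X p) - fderiv ℝ X p (Y p)

/-- The Nijenhuis torsion of `A`. -/
noncomputable def nijA (X Y : (Fin 3 → ℝ) → Fin 3 → ℝ) (p : Fin 3 → ℝ) : Fin 3 → ℝ :=
  Amap (Amap (lieBr X Y p)) + lieBr (Amap ∘ X) (Amap ∘ Y) p
    - Amap (lieBr (Amap ∘ X) Y p) - Amap (lieBr X (Amap ∘ Y) p)

/-- The normality tensor `N⁽¹⁾ = N_A + 2 dη ⊗ ξ`. -/
noncomputable def None (X Y : (Fin 3 → ℝ) → Fin 3 → ℝ) (p : Fin 3 → ℝ) : Fin 3 → ℝ :=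
  nijA X Y p +
    (fderiv ℝ (fun q => etaForm q (Y q)) p (X p)
      - fderiv ℝ (fun q => etaForm q (X q)) p (Y p)
      - etaForm p (lieBr X Y p)) • xiVF p

/-- On the constant coordinate fields `E₁ = ∂/∂x`, `E₂ = ∂/∂y`, the normality
tensor evaluates to `(0,0,1)` at every point; in particular `N⁽¹⁾ ≠ 0` and the
structure of Example 4.4 is not normal. -/
theorem normality_tensor_nonzero :
    (∀ p : Fin 3 → ℝ,
        None (fun _ => ![1, 0, 0]) (fun _ => ![0, 1, 0]) p = ![0, 0, 1]) ∧
      None (fun _ => ![1, 0, 0]) (fun _ => ![0, 1, 0]) ≠ fun _ => 0 := by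
  have key : ∀ p : Fin 3 → ℝ,
      None (fun _ => ![1, 0, 0]) (fun _ => ![0, 1, 0]) p = ![0, 0, 1] := by
    intro p
    have hc : ∀ v w : Fin 3 → ℝ, lieBr (fun _ => v) (fun _ => w) p = 0 := by
      intro v w
      simp [lieBr]
    have hcomp : ∀ v : Fin 3 → ℝ, (Amap ∘ fun _ : Fin 3 → ℝ => v) = fun _ => Amap v := by
      intro v
      rfl
    have hA : Amap 0 = 0 := by
      ext i
      fin_cases i <;> simp [Amap]
    have h1 : HasFDerivAt (fun q : Fin 3 → ℝ => q 1)
        (ContinuousLinearMap.proj (R := ℝ) (φ := fun _ : Fin 3 => ℝ) 1) p :=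
      (ContinuousLinearMap.proj (R := ℝ) (φ := fun _ : Fin 3 => ℝ) 1).hasFDerivAt
    have h2 : fderiv ℝ (fun q : Fin 3 → ℝ => etaForm q ![1, 0, 0]) p ![0, 1, 0]
        = -Real.exp (p 1) := by
      have h3 := (h1.exp.mul_const ((![1, 0, 0] : Fin 3 → ℝ) 2 - (![1, 0, 0] : Fin 3 → ℝ) 0))
      have h4 : fderiv ℝ (fun q : Fin 3 → ℝ => etaForm q ![1, 0, 0]) p = _ := h3.fderiv
      rw [h4]
      simp
    have h5 : fderiv ℝ (fun q : Fin 3 → ℝ => etaForm q ![0, 1, 0]) p ![1, 0, 0] = 0 := by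
      simp [etaForm]
    have h6 : etaForm p 0 = 0 := by simp [etaForm]
    have h7 : Real.exp (p 1) * Real.exp (-p 1) = 1 := by
      rw [← Real.exp_add]
      simp
    simp only [None, nijA, hcomp, hc, hA, h2, h5, h6, xiVF]
    ext i
    fin_cases i <;> simp [h7]
  refine ⟨key, fun h => ?_⟩
  have h0 := congrFun ((key 0).symm.trans (congrFun h 0)) 2
  simp at h0
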